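/- Let h ∈ ℤ be odd and k ∈ ℕ with k ≥ 1, gcd(h,k) = 1, and h/k ≠ −1. Then all q-Pochhammer denominators in the four finite sums below are nonzero, and F_{h,k}(ζ_{24k}^{h}, ζ_{24k}^{11h}) + F_{h,k}(ζ_{24k}^{5h}, ζ_{24k}^{7h}) + F_{h,k}(−ζ_{24k}^{h}, −ζ_{24k}^{11h}) + F_{h,k}(−ζ_{24k}^{5h}, −ζ_{24k}^{7h}) = 0. (This is identity (1.10) of Corollary 1.3 for m = 4, valid for h/k ∈ S₄₁∖{−1}.) -/

import Mathlib

open Complex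

/-- The root of unity `ζ_N = e^{2πi/N}`. -/
noncomputable def zetaRoot (N : ℕ) : ℂ := Complex.exp (2 * (Real.pi : ℂ) * I / N)

/-- The q-Pochhammer symbol `(a; q)_n = ∏_{j=0}^{n-1} (1 - a q^j)`. -/
noncomputable def qPoch (a q : ℂ) (n : ℕ) : ℂ := ∏ j ∈ Finset.range n, (1 - a * q ^ j)

/-- The truncated q-hypergeometric series
`F_{h,k}(z₁,z₂) = ∑_{n=0}^{k−1} (−ζ_{2k}^h; ζ_{2k}^h)_n ζ_{4k}^{n(n+1)h}
  / ((z₁; ζ_{2k}^h)_{n+1}(z₂; ζ_{2k}^h)_{n+1})`. -/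
noncomputable def Fhk (h : ℤ) (k : ℕ) (z₁ z₂ : ℂ) : ℂ :=
  ∑ n ∈ Finset.range k,
    qPoch (-(zetaRoot (2 * k) ^ h)) (zetaRoot (2 * k) ^ h) n *
        zetaRoot (4 * k) ^ ((n * (n + 1) : ℤ) * h) /
      (qPoch z₁ (zetaRoot (2 * k) ^ h) (n + 1) * qPoch z₂ (zetaRoot (2 * k) ^ h) (n + 1))

/-!
Write `q = ζ_{2k}^h`, so that `q ^ k = -1`, and consider `G(z) = F_{h,k}(z, q / z)`. The sum
`G(q z) + z² G(z)` telescopes, and its upper boundary term carries the factor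
`(-q; q)_k = 0`; hence `G(q z) + z² G(z) = -z`. The inhomogeneity is odd, so the even part
`E(z) = G(z) + G(-z)` satisfies `E(q z) = -z² E(z)`. Iterating `k` times leads from `z` to
`q ^ k z = -z` and gives `E(-z) = -z ^ (2k) E(z)`. As `E` is even, `E(z) = 0` as soon as
`z ^ (4k) ≠ 1`, which excludes both the poles, where `z ^ (2k) = 1`, and the exceptional case
`z ^ (2k) = -1`. The four sums form two pairs `G(z) + G(-z)`, at `z = ζ_{24k}^h` and
`z = ζ_{24k}^{5h}`.
-/

section QPochhammer

variable {a q : ℂ}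

lemma qPoch_ne_zero_iff {n : ℕ} : qPoch a q n ≠ 0 ↔ ∀ j < n, a * q ^ j ≠ 1 := by
  simp only [qPoch, Finset.prod_ne_zero_iff, Finset.mem_range, sub_ne_zero, @ne_comm ℂ 1]

lemma mul_pow_ne_one_of_pow_eq_one {M : Type*} [CommMonoid M] {a q : M} {m : ℕ} (hq : q ^ m = 1)
    (ha : a ^ m ≠ 1) (j : ℕ) : a * q ^ j ≠ 1 := by
  intro h
  apply ha
  calc a ^ m = (a * q ^ j) ^ m := by rw [mul_pow, pow_right_comm, hq, one_pow, mul_one]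
    _ = 1 := by rw [h, one_pow]

lemma qPoch_succ (a q : ℂ) (n : ℕ) : qPoch a q (n + 1) = qPoch a q n * (1 - a * q ^ n) :=
  Finset.prod_range_succ _ n

lemma qPoch_succ' (a q : ℂ) (n : ℕ) : qPoch a q (n + 1) = (1 - a) * qPoch (a * q) q n := by
  simp only [qPoch, Finset.prod_range_succ', pow_zero, mul_one, pow_succ', mul_assoc, mul_comm]

lemma qPoch_neg_self_eq_zero {k : ℕ} (hk : k ≠ 0) (hq : q ^ k = -1) : qPoch (-q) q k = 0 := by
  refine Finset.prod_eq_zero (Finset.mem_range.mpr (Nat.sub_one_lt hk)) ?_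
  rw [neg_mul, mul_pow_sub_one hk, hq, neg_neg, sub_self]

end QPochhammer

section Telescoping

variable {q z : ℂ}

/-- The `n`-th term of the series `∑ (-q; q)_n q^{n(n+1)/2} / ((z; q)_{n+1} (w; q)_{n+1})`, of
which `F_{h,k}` is the truncation at `q = ζ_{2k}^h`. The exponent is encoded as a binomial
coefficient, so that no square root of `q` is needed. -/
noncomputable def qHyperTerm (q z w : ℂ) (n : ℕ) : ℂ :=
  qPoch (-q) q n * q ^ (n + 1).choose 2 / (qPoch z q (n + 1) * qPoch w q (n + 1))

/-- The potential `(-q; q)_n q^{n(n+1)/2} / ((q z; q)_n (q / z; q)_n)`, whose consecutive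
differences are the terms of `G(q z) + z² G(z)` up to the factor `z`. -/
noncomputable def qHyperPotential (q z : ℂ) (n : ℕ) : ℂ :=
  qPoch (-q) q n * q ^ (n + 1).choose 2 / (qPoch (z * q) q n * qPoch (z⁻¹ * q) q n)

lemma telescoping_kernel {K : Type*} [Field K] {y z : K} (hz₀ : z ≠ 0) (hz : 1 - z ≠ 0)
    (hzy : 1 - z * y ≠ 0) (hzy' : 1 - z⁻¹ * y ≠ 0) :
    1 / ((1 - z * y) * (1 - z⁻¹)) + z ^ 2 * (1 / ((1 - z) * (1 - z⁻¹ * y))) =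
      z * ((1 + y) * y / ((1 - z * y) * (1 - z⁻¹ * y)) - 1) := by
  have h₁ : 1 - z⁻¹ = -(1 - z) / z := by field_simp; ring
  have h₂ : 1 - z⁻¹ * y = (z - y) / z := by field_simp
  have hzy'' : z - y ≠ 0 := by intro h; simp [h₂, h] at hzy'
  rw [h₁, h₂]
  field_simp
  ring

lemma qHyperPotential_succ (q z : ℂ) (n : ℕ) :
    qHyperPotential q z (n + 1) = qHyperPotential q z n *
      ((1 + q ^ (n + 1)) * q ^ (n + 1) /
        ((1 - z * q ^ (n + 1)) * (1 - z⁻¹ * q ^ (n + 1)))) := by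
  have choose_succ : (n + 1 + 1).choose 2 = (n + 1) + (n + 1).choose 2 := by
    rw [Nat.choose_succ_succ', Nat.choose_one_right]
  simp only [qHyperPotential, qPoch_succ, choose_succ, pow_add q (n + 1), neg_mul,
    sub_neg_eq_add, mul_assoc _ q, ← pow_succ', div_mul_div_comm]
  congr 1 <;> ring

lemma qHyperTerm_mul_inv_eq (q z : ℂ) (n : ℕ) :
    qHyperTerm q (z * q) z⁻¹ n =
      qHyperPotential q z n * (1 / ((1 - z * q ^ (n + 1)) * (1 - z⁻¹))) := by
  rw [qHyperTerm, qHyperPotential, qPoch_succ (z * q), qPoch_succ' z⁻¹, mul_assoc z,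
    ← pow_succ', div_mul_div_comm]
  congr 1 <;> ring

lemma qHyperTerm_inv_mul_eq (q z : ℂ) (n : ℕ) :
    qHyperTerm q z (z⁻¹ * q) n =
      qHyperPotential q z n * (1 / ((1 - z) * (1 - z⁻¹ * q ^ (n + 1)))) := by
  rw [qHyperTerm, qHyperPotential, qPoch_succ' z, qPoch_succ (z⁻¹ * q), mul_assoc z⁻¹,
    ← pow_succ', div_mul_div_comm]
  congr 1 <;> ring

lemma sum_qHyperTerm_add_sq_mul (N : ℕ) (hz₀ : z ≠ 0) (hz : ∀ j ≤ N, z * q ^ j ≠ 1)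
    (hz' : ∀ j ≤ N, z⁻¹ * q ^ j ≠ 1) :
    ∑ n ∈ Finset.range N, (qHyperTerm q (z * q) z⁻¹ n + z ^ 2 * qHyperTerm q z (z⁻¹ * q) n) =
      z * (qHyperPotential q z N - 1) := by
  have potential_zero : qHyperPotential q z 0 = 1 := by simp [qHyperPotential, qPoch]
  have telescope (n : ℕ) (hn : n < N) :
      qHyperTerm q (z * q) z⁻¹ n + z ^ 2 * qHyperTerm q z (z⁻¹ * q) n =
        z * (qHyperPotential q z (n + 1) - qHyperPotential q z n) := by
    have kernel := telescoping_kernel (y := q ^ (n + 1)) hz₀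
      (sub_ne_zero.mpr (by simpa only [pow_zero, mul_one] using (hz 0 N.zero_le).symm))
      (sub_ne_zero.mpr (hz (n + 1) hn).symm) (sub_ne_zero.mpr (hz' (n + 1) hn).symm)
    rw [qHyperTerm_mul_inv_eq, qHyperTerm_inv_mul_eq, qHyperPotential_succ]
    linear_combination qHyperPotential q z n * kernel
  rw [Finset.sum_congr rfl fun n hn => telescope n (Finset.mem_range.mp hn), ← Finset.mul_sum,
    Finset.sum_range_sub, potential_zero]

end Telescoping

section EvenQuasiperiodic

variable {R : Type*} [CommRing R] {f : R → R} {q z : R} {k : ℕ}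

lemma apply_mul_pow_of_quasiperiodic
    (hf : ∀ j : ℕ, f (z * q ^ j * q) = -(z * q ^ j) ^ 2 * f (z * q ^ j)) (m : ℕ) :
    f (z * q ^ m) = (-z ^ 2) ^ m * q ^ (m * (m - 1)) * f z := by
  induction m with
  | zero => simp
  | succ m ih =>
    have exponent : (m + 1) * (m + 1 - 1) = m * (m - 1) + m * 2 := by
      cases m with
      | zero => rfl
      | succ m => simp only [Nat.add_sub_cancel]; ring
    rw [pow_succ q m, ← mul_assoc, hf, ih, exponent, pow_add, pow_mul]
    ring

lemma apply_eq_zero_of_even_of_quasiperiodic [NoZeroDivisors R] (hk : k ≠ 0) (hq : q ^ k = -1)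
    (hf : ∀ j : ℕ, f (z * q ^ j * q) = -(z * q ^ j) ^ 2 * f (z * q ^ j))
    (hf_even : f (-z) = f z) (hz : z ^ (2 * k) ≠ -1) : f z = 0 := by
  have sign : (-1 : R) ^ k * (-1) ^ (k - 1) = -1 := by
    rw [← pow_add]
    exact Odd.neg_one_pow ⟨k - 1, by omega⟩
  have half_period : f z = -z ^ (2 * k) * f z :=
    calc f z = f (z * q ^ k) := by rw [hq, mul_neg_one, hf_even]
      _ = (-z ^ 2) ^ k * (-1) ^ (k - 1) * f z := by
        rw [apply_mul_pow_of_quasiperiodic hf, pow_mul q, hq]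
      _ = -z ^ (2 * k) * f z := by
        rw [neg_pow (z ^ 2), ← pow_mul]
        linear_combination z ^ (2 * k) * f z * sign
  have product_eq_zero : (z ^ (2 * k) + 1) * f z = 0 := by linear_combination half_period
  exact (mul_eq_zero.mp product_eq_zero).resolve_left fun h => hz (eq_neg_of_add_eq_zero_left h)

end EvenQuasiperiodic

section HalfPeriod

variable {q z : ℂ} {k : ℕ}

/-- The truncated series `G(z) = F_{h,k}(z, q / z)`, with `q` in place of `ζ_{2k}^h`. -/
noncomputable def qHyperSum (q : ℂ) (k : ℕ) (z : ℂ) : ℂ :=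
  ∑ n ∈ Finset.range k, qHyperTerm q z (z⁻¹ * q) n

lemma pow_two_mul_eq_one_of_pow_eq_neg_one {R : Type*} [Ring R] {q : R} {k : ℕ} (hq : q ^ k = -1) :
    q ^ (2 * k) = 1 := by
  rw [pow_mul', hq, neg_one_sq]

lemma qHyperSum_mul_add_sq_mul (hk : k ≠ 0) (hq : q ^ k = -1) (hz₀ : z ≠ 0)
    (hz : z ^ (2 * k) ≠ 1) :
    qHyperSum q k (z * q) + z ^ 2 * qHyperSum q k z = -z := by
  have hq₂ := pow_two_mul_eq_one_of_pow_eq_neg_one hq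
  have hq₀ : q ≠ 0 := (IsUnit.of_pow_eq_one hq₂ (by omega)).ne_zero
  have hz' : z⁻¹ ^ (2 * k) ≠ 1 := by rwa [inv_pow, ne_eq, inv_eq_one]
  have top_eq_zero : qHyperPotential q z k = 0 := by
    rw [qHyperPotential, qPoch_neg_self_eq_zero hk hq, zero_mul, zero_div]
  have shifted_param : (z * q)⁻¹ * q = z⁻¹ := by field_simp
  have telescoped := sum_qHyperTerm_add_sq_mul k hz₀
    (fun j _ => mul_pow_ne_one_of_pow_eq_one hq₂ hz j)
    (fun j _ => mul_pow_ne_one_of_pow_eq_one hq₂ hz' j)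
  rw [Finset.sum_add_distrib, ← Finset.mul_sum, top_eq_zero] at telescoped
  rw [qHyperSum, qHyperSum, shifted_param, telescoped]
  ring

lemma qHyperSum_neg (hk : k ≠ 0) (hq : q ^ k = -1) (hz₀ : z ≠ 0) (hz : z ^ (4 * k) ≠ 1) :
    qHyperSum q k (-z) = -qHyperSum q k z := by
  have hq₂ := pow_two_mul_eq_one_of_pow_eq_neg_one hq
  have hq₀ : q ≠ 0 := (IsUnit.of_pow_eq_one hq₂ (by omega)).ne_zero
  obtain ⟨hz_one, hz_neg_one⟩ : z ^ (2 * k) ≠ 1 ∧ z ^ (2 * k) ≠ -1 := by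
    rw [← not_or, ← sq_eq_one_iff, ← pow_mul]
    rwa [show 2 * k * 2 = 4 * k by ring]
  let evenPart (w : ℂ) : ℂ := qHyperSum q k w + qHyperSum q k (-w)
  have evenPart_mul (j : ℕ) :
      evenPart (z * q ^ j * q) = -(z * q ^ j) ^ 2 * evenPart (z * q ^ j) := by
    have hw₀ : z * q ^ j ≠ 0 := mul_ne_zero hz₀ (pow_ne_zero j hq₀)
    have hw : (z * q ^ j) ^ (2 * k) ≠ 1 := by
      rwa [mul_pow, pow_right_comm, hq₂, one_pow, mul_one]
    have at_pos := qHyperSum_mul_add_sq_mul hk hq hw₀ hw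
    have at_neg := qHyperSum_mul_add_sq_mul hk hq (neg_ne_zero.mpr hw₀)
      (by rwa [(even_two_mul k).neg_pow])
    rw [neg_mul] at at_neg
    linear_combination at_pos + at_neg
  have evenPart_neg : evenPart (-z) = evenPart z := by
    simp only [evenPart, neg_neg, add_comm]
  have evenPart_eq_zero : evenPart z = 0 :=
    apply_eq_zero_of_even_of_quasiperiodic hk hq evenPart_mul evenPart_neg hz_neg_one
  exact eq_neg_of_add_eq_zero_right evenPart_eq_zero

end HalfPeriod

section RootsOfUnity

lemma zetaRoot_ne_zero (N : ℕ) : zetaRoot N ≠ 0 :=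
  Complex.exp_ne_zero _

lemma isPrimitiveRoot_zetaRoot {N : ℕ} (hN : N ≠ 0) : IsPrimitiveRoot (zetaRoot N) N :=
  isPrimitiveRoot_exp N hN

lemma zetaRoot_mul_pow {a : ℕ} (ha : a ≠ 0) (N : ℕ) : zetaRoot (a * N) ^ a = zetaRoot N := by
  have ha' : (a : ℂ) ≠ 0 := Nat.cast_ne_zero.mpr ha
  rw [zetaRoot, zetaRoot, ← Complex.exp_nat_mul, Nat.cast_mul, mul_div_assoc',
    mul_div_mul_left _ _ ha']

lemma zetaRoot_mul_zpow_pow {a : ℕ} (ha : a ≠ 0) (N : ℕ) (c : ℤ) :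
    (zetaRoot (a * N) ^ c) ^ a = zetaRoot N ^ c := by
  rw [← zpow_natCast, zpow_comm, zpow_natCast, zetaRoot_mul_pow ha]

lemma zetaRoot_two : zetaRoot 2 = -1 :=
  (isPrimitiveRoot_zetaRoot two_ne_zero).eq_neg_one_of_two_right

variable {h c d : ℤ} {k : ℕ}

lemma zetaRoot_two_mul_zpow_pow (hk : k ≠ 0) (hh : Odd h) : (zetaRoot (2 * k) ^ h) ^ k = -1 := by
  rw [mul_comm, zetaRoot_mul_zpow_pow hk, zetaRoot_two, hh.neg_one_zpow]

lemma zetaRoot_zpow_pow_ne_one {a N : ℕ} (ha : a ≠ 0) (hN : N ≠ 0) (hc : ¬ (N : ℤ) ∣ c) :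
    (zetaRoot (a * N) ^ c) ^ a ≠ 1 := by
  rwa [zetaRoot_mul_zpow_pow ha, ne_eq, (isPrimitiveRoot_zetaRoot hN).zpow_eq_one_iff_dvd]

lemma qPoch_zetaRoot_ne_zero (hk : k ≠ 0) (hc : ¬ 12 ∣ c) (h : ℤ) (n : ℕ) :
    qPoch (zetaRoot (24 * k) ^ c) (zetaRoot (2 * k) ^ h) n ≠ 0 ∧
      qPoch (-(zetaRoot (24 * k) ^ c)) (zetaRoot (2 * k) ^ h) n ≠ 0 := by
  have hq : (zetaRoot (2 * k) ^ h) ^ (2 * k) = 1 := by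
    rw [← zpow_natCast, zpow_comm, zpow_natCast,
      (isPrimitiveRoot_zetaRoot (by omega)).pow_eq_one, one_zpow]
  have hz : (zetaRoot (24 * k) ^ c) ^ (2 * k) ≠ 1 := by
    rw [show 24 * k = 2 * k * 12 by ring]
    exact zetaRoot_zpow_pow_ne_one (by omega) (by norm_num) hc
  have hz_neg : (-(zetaRoot (24 * k) ^ c)) ^ (2 * k) ≠ 1 := by rwa [(even_two_mul k).neg_pow]
  exact ⟨qPoch_ne_zero_iff.mpr fun j _ => mul_pow_ne_one_of_pow_eq_one hq hz j,
    qPoch_ne_zero_iff.mpr fun j _ => mul_pow_ne_one_of_pow_eq_one hq hz_neg j⟩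

lemma Fhk_eq_qHyperSum {z w : ℂ} (hzw : z * w = zetaRoot (2 * k) ^ h) :
    Fhk h k z w = qHyperSum (zetaRoot (2 * k) ^ h) k z := by
  have hz₀ : z ≠ 0 :=
    left_ne_zero_of_mul (hzw.trans_ne (zpow_ne_zero h (zetaRoot_ne_zero _)))
  have hw : w = z⁻¹ * zetaRoot (2 * k) ^ h := by rw [← hzw, inv_mul_cancel_left₀ hz₀]
  have triangle (n : ℕ) : (n * (n + 1) : ℤ) = (2 : ℕ) * (n + 1).choose 2 := by
    exact_mod_cast show n * (n + 1) = 2 * (n + 1).choose 2 by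
      rw [mul_comm, mul_comm 2, ← Nat.add_one_mul_choose_eq, Nat.choose_one_right]
  have power (n : ℕ) : zetaRoot (4 * k) ^ ((n * (n + 1) : ℤ) * h) =
      (zetaRoot (2 * k) ^ h) ^ (n + 1).choose 2 := by
    rw [triangle, mul_assoc, zpow_mul, zpow_natCast, show 4 * k = 2 * (2 * k) by ring,
      zetaRoot_mul_pow two_ne_zero, mul_comm _ h, zpow_mul, zpow_natCast]
  simp only [Fhk, qHyperSum, qHyperTerm, power, hw]

lemma Fhk_neg_neg {z w : ℂ} (hk : k ≠ 0) (hh : Odd h) (hzw : z * w = zetaRoot (2 * k) ^ h)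
    (hz : z ^ (4 * k) ≠ 1) : Fhk h k (-z) (-w) = -Fhk h k z w := by
  have hz₀ : z ≠ 0 :=
    left_ne_zero_of_mul (hzw.trans_ne (zpow_ne_zero h (zetaRoot_ne_zero _)))
  rw [Fhk_eq_qHyperSum hzw, Fhk_eq_qHyperSum (by rwa [neg_mul_neg]),
    qHyperSum_neg hk (zetaRoot_two_mul_zpow_pow hk hh) hz₀ hz]

lemma Fhk_zetaRoot_neg_neg (hk : k ≠ 0) (hh : Odd h) (hc : ¬ 6 ∣ c) (hcd : c + d = 12 * h) :
    Fhk h k (-(zetaRoot (24 * k) ^ c)) (-(zetaRoot (24 * k) ^ d)) =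
      -Fhk h k (zetaRoot (24 * k) ^ c) (zetaRoot (24 * k) ^ d) := by
  refine Fhk_neg_neg hk hh ?_ ?_
  · rw [← zpow_add₀ (zetaRoot_ne_zero _), hcd, zpow_mul, show 24 * k = 12 * (2 * k) by ring,
      zpow_ofNat, zetaRoot_mul_pow (by norm_num)]
  · rw [show 24 * k = 4 * k * 6 by ring]
    exact zetaRoot_zpow_pow_ne_one (by omega) (by norm_num) hc

end RootsOfUnity

theorem Fhk_vanishing_sum_m4_general (h : ℤ) (k : ℕ) (hk : 1 ≤ k) (hodd : Odd h) :
    (∀ n ∈ Finset.range k,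
      qPoch (zetaRoot (24 * k) ^ h) (zetaRoot (2 * k) ^ h) (n + 1) ≠ 0 ∧
      qPoch (zetaRoot (24 * k) ^ (11 * h)) (zetaRoot (2 * k) ^ h) (n + 1) ≠ 0 ∧
      qPoch (zetaRoot (24 * k) ^ (5 * h)) (zetaRoot (2 * k) ^ h) (n + 1) ≠ 0 ∧
      qPoch (zetaRoot (24 * k) ^ (7 * h)) (zetaRoot (2 * k) ^ h) (n + 1) ≠ 0 ∧
      qPoch (-(zetaRoot (24 * k) ^ h)) (zetaRoot (2 * k) ^ h) (n + 1) ≠ 0 ∧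
      qPoch (-(zetaRoot (24 * k) ^ (11 * h))) (zetaRoot (2 * k) ^ h) (n + 1) ≠ 0 ∧
      qPoch (-(zetaRoot (24 * k) ^ (5 * h))) (zetaRoot (2 * k) ^ h) (n + 1) ≠ 0 ∧
      qPoch (-(zetaRoot (24 * k) ^ (7 * h))) (zetaRoot (2 * k) ^ h) (n + 1) ≠ 0) ∧
    Fhk h k (zetaRoot (24 * k) ^ h) (zetaRoot (24 * k) ^ (11 * h)) +
      Fhk h k (zetaRoot (24 * k) ^ (5 * h)) (zetaRoot (24 * k) ^ (7 * h)) +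
      Fhk h k (-(zetaRoot (24 * k) ^ h)) (-(zetaRoot (24 * k) ^ (11 * h))) +
      Fhk h k (-(zetaRoot (24 * k) ^ (5 * h))) (-(zetaRoot (24 * k) ^ (7 * h))) = 0 := by
  have hk₀ : k ≠ 0 := by omega
  have ⟨m, hm⟩ := hodd
  refine ⟨fun n _ => ?_, ?_⟩
  · have hpos {c : ℤ} (hc : ¬ 12 ∣ c) := (qPoch_zetaRoot_ne_zero hk₀ hc h (n + 1)).1
    have hneg {c : ℤ} (hc : ¬ 12 ∣ c) := (qPoch_zetaRoot_ne_zero hk₀ hc h (n + 1)).2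
    exact ⟨hpos (by omega), hpos (by omega), hpos (by omega), hpos (by omega),
      hneg (by omega), hneg (by omega), hneg (by omega), hneg (by omega)⟩
  · rw [Fhk_zetaRoot_neg_neg hk₀ hodd (c := h) (by omega) (by ring),
      Fhk_zetaRoot_neg_neg hk₀ hodd (c := 5 * h) (by omega) (by ring)]
    ring

/-- Identity (1.10) of Corollary 1.3 (the `m = 4` case), valid for `h/k ∈ S₄₁ ∖ {−1}`;
in addition all q-Pochhammer denominators are nonzero. -/
theorem Fhk_vanishing_sum_m4 (h : ℤ) (k : ℕ) (hk : 1 ≤ k)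
    (hodd : Odd h) (hcop : Int.gcd h (k : ℤ) = 1) (hne : (h : ℚ) / (k : ℚ) ≠ -1) :
    (∀ n ∈ Finset.range k,
      qPoch (zetaRoot (24 * k) ^ h) (zetaRoot (2 * k) ^ h) (n + 1) ≠ 0 ∧
      qPoch (zetaRoot (24 * k) ^ (11 * h)) (zetaRoot (2 * k) ^ h) (n + 1) ≠ 0 ∧
      qPoch (zetaRoot (24 * k) ^ (5 * h)) (zetaRoot (2 * k) ^ h) (n + 1) ≠ 0 ∧
      qPoch (zetaRoot (24 * k) ^ (7 * h)) (zetaRoot (2 * k) ^ h) (n + 1) ≠ 0 ∧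
      qPoch (-(zetaRoot (24 * k) ^ h)) (zetaRoot (2 * k) ^ h) (n + 1) ≠ 0 ∧
      qPoch (-(zetaRoot (24 * k) ^ (11 * h))) (zetaRoot (2 * k) ^ h) (n + 1) ≠ 0 ∧
      qPoch (-(zetaRoot (24 * k) ^ (5 * h))) (zetaRoot (2 * k) ^ h) (n + 1) ≠ 0 ∧
      qPoch (-(zetaRoot (24 * k) ^ (7 * h))) (zetaRoot (2 * k) ^ h) (n + 1) ≠ 0) ∧
    Fhk h k (zetaRoot (24 * k) ^ h) (zetaRoot (24 * k) ^ (11 * h)) +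
      Fhk h k (zetaRoot (24 * k) ^ (5 * h)) (zetaRoot (24 * k) ^ (7 * h)) +
      Fhk h k (-(zetaRoot (24 * k) ^ h)) (-(zetaRoot (24 * k) ^ (11 * h))) +
      Fhk h k (-(zetaRoot (24 * k) ^ (5 * h))) (-(zetaRoot (24 * k) ^ (7 * h))) = 0 :=
  Fhk_vanishing_sum_m4_general h k hk hodd
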